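/- Let ω be a minuscule weight, I = {α ∈ S : ⟨ω, α∨⟩ = 0} and W^I = {w ∈ W : w(α) > 0 for all α ∈ I}. Let w ∈ W^I and let w = s_{i_1}·s_{i_2}⋯s_{i_k} be a reduced expression. Then w(ω) = ω − Σ_{j=1}^k α_{i_j}, and ℓ(w) = ht(ω − w(ω)). -/

import Mathlib

open scoped RealInnerProductSpace

/-- A finite reduced crystallographic root system `Φ` spanning a real inner product
space `V`, together with a fixed base of simple roots `α 0, …, α (l-1)`: every root is
a nonnegative or nonpositive integral combination of the simple roots.  The simple
reflections `s i` are given by the usual formula `s_α(λ) = λ − ⟨λ, α∨⟩ α`. -/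
structure RootSystemWithBase (V : Type*) [NormedAddCommGroup V] [InnerProductSpace ℝ V] where
  l : ℕ
  Φ : Finset V
  α : Fin l → V
  s : Fin l → V ≃ₗ[ℝ] V
  α_mem : ∀ i, α i ∈ Φ
  root_ne_zero : ∀ β ∈ Φ, β ≠ (0 : V)
  root_span : Submodule.span ℝ (Φ : Set V) = ⊤
  simple_indep : LinearIndependent ℝ α
  crystallographic : ∀ β ∈ Φ, ∀ γ ∈ Φ, ∃ z : ℤ, 2 * ⟪β, γ⟫ / ⟪γ, γ⟫ = (z : ℝ)
  reduced : ∀ β ∈ Φ, ∀ c : ℝ, c • β ∈ Φ → c = 1 ∨ c = -1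
  base : ∀ β ∈ Φ,
    (∃ c : Fin l → ℤ, (∀ i, 0 ≤ c i) ∧ β = ∑ i, (c i : ℝ) • α i) ∨
    (∃ c : Fin l → ℤ, (∀ i, 0 ≤ c i) ∧ β = -(∑ i, (c i : ℝ) • α i))
  s_apply : ∀ i v, s i v = v - (2 * ⟪v, α i⟫ / ⟪α i, α i⟫) • α i
  s_root : ∀ β ∈ Φ, ∀ i, s i β ∈ Φ

namespace RootSystemWithBase

variable {V : Type*} [NormedAddCommGroup V] [InnerProductSpace ℝ V]

/-- The pairing `⟨λ, β∨⟩ = 2(λ,β)/(β,β)`. -/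
noncomputable def pairing (_D : RootSystemWithBase V) (lam β : V) : ℝ :=
  2 * ⟪lam, β⟫ / ⟪β, β⟫

/-- The Weyl group: the subgroup of `GL(V)` generated by the simple reflections. -/
def W (D : RootSystemWithBase V) : Subgroup (V ≃ₗ[ℝ] V) := Subgroup.closure (Set.range D.s)

/-- The product `s_{i₁} · s_{i₂} ⋯ s_{i_k}` of simple reflections along a word. -/
def wordProd (D : RootSystemWithBase V) (L : List (Fin D.l)) : V ≃ₗ[ℝ] V := (L.map D.s).prod

/-- The length `ℓ(w)`: the least `k` such that `w` is a product of `k` simple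
reflections. -/
noncomputable def len (D : RootSystemWithBase V) (w : V ≃ₗ[ℝ] V) : ℕ :=
  sInf {k | ∃ L : List (Fin D.l), L.length = k ∧ D.wordProd L = w}

/-- `v` is a linear combination of the simple roots with all coefficients `≥ 0`. -/
def IsNonnegComb (D : RootSystemWithBase V) (v : V) : Prop :=
  ∃ c : Fin D.l → ℝ, (∀ i, 0 ≤ c i) ∧ v = ∑ i, c i • D.α i

/-- `v > 0`: a nonzero nonnegative combination of the simple roots. -/
def IsPos (D : RootSystemWithBase V) (v : V) : Prop := D.IsNonnegComb v ∧ v ≠ 0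

/-- `x ≤ y` for vectors: `y − x` is a nonnegative combination of the simple roots. -/
def vle (D : RootSystemWithBase V) (x y : V) : Prop := D.IsNonnegComb (y - x)

/-- `λ` is dominant: `⟨λ, αᵢ∨⟩ ≥ 0` for all `i`. -/
def IsDominant (D : RootSystemWithBase V) (lam : V) : Prop :=
  ∀ i, 0 ≤ D.pairing lam (D.α i)

/-- `ω` is minuscule: dominant with `⟨ω, β∨⟩ ∈ {−1, 0, 1}` for every root `β`. -/
def IsMinuscule (D : RootSystemWithBase V) (ω : V) : Prop :=
  D.IsDominant ω ∧ ∀ β ∈ D.Φ, D.pairing ω β = -1 ∨ D.pairing ω β = 0 ∨ D.pairing ω β = 1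

/-- `W^I = {w ∈ W : w(α) > 0 for all α ∈ I}` where `I = {α ∈ S : ⟨ω, α∨⟩ = 0}`. -/
def WI (D : RootSystemWithBase V) (ω : V) : Set (V ≃ₗ[ℝ] V) :=
  {w | w ∈ D.W ∧ ∀ i, D.pairing ω (D.α i) = 0 → D.IsPos (w (D.α i))}

/-- `w ≤ τ` in `W`:  `ℓ(τ) = ℓ(w) + ℓ(τ w⁻¹)`. -/
def wle (D : RootSystemWithBase V) (w τ : V ≃ₗ[ℝ] V) : Prop :=
  D.len τ = D.len w + D.len (τ * w⁻¹)

end RootSystemWithBase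

/-!
Applying the reflections of a reduced word one at a time, from right to left, it is enough to see
that each step `v ω ↦ s i (v ω)` subtracts exactly `α i`, that is, `⟨v ω, α i∨⟩ = ⟨ω, γ∨⟩ = 1` for
the root `γ = v⁻¹ (α i)`. Reducedness gives `γ > 0` by the exchange argument, so this pairing is
`0` or `1`. If it were `0`, dominance of `ω` would make `γ` a nonnegative combination of simple
roots in `I`, which `s i * v ∈ W^I` sends to nonnegative combinations; but it sends `γ` to `-α i`.
-/

namespace RootSystemWithBase

variable {V : Type*} [NormedAddCommGroup V] [InnerProductSpace ℝ V] (D : RootSystemWithBase V)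
  {i : Fin D.l} {L : List (Fin D.l)} {v β ω : V} {w : V ≃ₗ[ℝ] V}

lemma span_range_simple : Submodule.span ℝ (Set.range D.α) = ⊤ := by
  refine top_unique (D.root_span ▸ Submodule.span_le.2 fun β hβ => ?_)
  have sum_mem (c : Fin D.l → ℤ) :
      ∑ i, (c i : ℝ) • D.α i ∈ Submodule.span ℝ (Set.range D.α) :=
    Submodule.sum_mem _ fun i _ => Submodule.smul_mem _ _ (Submodule.subset_span ⟨i, rfl⟩)
  rcases D.base β hβ with ⟨c, -, rfl⟩ | ⟨c, -, rfl⟩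
  · exact sum_mem c
  · exact Submodule.neg_mem _ (sum_mem c)

/-- The simple roots as a basis of `V`, giving access to the coefficients of a vector. -/
noncomputable def simpleBasis : Module.Basis (Fin D.l) ℝ V :=
  Module.Basis.mk D.simple_indep D.span_range_simple.ge

@[simp]
lemma simpleBasis_apply (i : Fin D.l) : D.simpleBasis i = D.α i := by
  simp [simpleBasis]

lemma sum_repr_smul_simple (v : V) : ∑ i, D.simpleBasis.repr v i • D.α i = v := by
  simpa only [simpleBasis_apply] using D.simpleBasis.sum_repr v

lemma repr_simple (i j : Fin D.l) :
    D.simpleBasis.repr (D.α i) j = if i = j then 1 else 0 := by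
  rw [← D.simpleBasis_apply i, Module.Basis.repr_self, Finsupp.single_apply]

/-- The height `ht`, extended linearly to all of `V`. -/
noncomputable def height : V →ₗ[ℝ] ℝ := D.simpleBasis.sumCoords

lemma height_simple (i : Fin D.l) : D.height (D.α i) = 1 := by
  rw [← D.simpleBasis_apply i, height, Module.Basis.sumCoords_self_apply]

lemma height_sum_smul_simple (c : Fin D.l → ℝ) : D.height (∑ i, c i • D.α i) = ∑ i, c i := by
  simp [height_simple]

lemma height_sum_map_simple (L : List (Fin D.l)) : D.height (L.map D.α).sum = L.length := by
  simp [map_list_sum, Function.comp_def, height_simple]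

lemma isNonnegComb_iff : D.IsNonnegComb v ↔ ∀ i, 0 ≤ D.simpleBasis.repr v i := by
  refine ⟨?_, fun h => ⟨_, h, (D.sum_repr_smul_simple v).symm⟩⟩
  rintro ⟨c, hc, rfl⟩ i
  simpa [repr_simple] using hc i

lemma isNonnegComb_simple (i : Fin D.l) : D.IsNonnegComb (D.α i) := by
  refine D.isNonnegComb_iff.2 fun j => ?_
  rw [repr_simple]
  positivity

lemma isPos_simple (i : Fin D.l) : D.IsPos (D.α i) :=
  ⟨D.isNonnegComb_simple i, D.root_ne_zero _ (D.α_mem i)⟩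

lemma isPos_or_isPos_neg (hβ : β ∈ D.Φ) : D.IsPos β ∨ D.IsPos (-β) := by
  have hne := D.root_ne_zero β hβ
  refine (D.base β hβ).imp ?_ ?_ <;> rintro ⟨c, hc, h⟩
  · exact ⟨⟨fun i => c i, fun i => Int.cast_nonneg (hc i), h⟩, hne⟩
  · exact ⟨⟨fun i => c i, fun i => Int.cast_nonneg (hc i), neg_eq_iff_eq_neg.2 h⟩,
      neg_ne_zero.2 hne⟩

lemma inner_simple_self_ne_zero (i : Fin D.l) : ⟪D.α i, D.α i⟫ ≠ 0 :=
  inner_self_ne_zero.2 (D.root_ne_zero _ (D.α_mem i))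

lemma s_apply_eq_sub_pairing (i : Fin D.l) (v : V) :
    D.s i v = v - D.pairing v (D.α i) • D.α i :=
  D.s_apply i v

lemma s_simple_self (i : Fin D.l) : D.s i (D.α i) = -D.α i := by
  rw [D.s_apply, mul_div_assoc, div_self (D.inner_simple_self_ne_zero i)]
  module

lemma s_mul_self (i : Fin D.l) : D.s i * D.s i = 1 := by
  ext v
  rw [LinearEquiv.mul_apply, LinearEquiv.coe_one, id_eq, D.s_apply_eq_sub_pairing i v, map_sub,
    map_smul, s_simple_self, s_apply_eq_sub_pairing]
  module

lemma s_inv (i : Fin D.l) : (D.s i)⁻¹ = D.s i :=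
  inv_eq_of_mul_eq_one_left (D.s_mul_self i)

lemma inner_s_s (i : Fin D.l) (x y : V) : ⟪D.s i x, D.s i y⟫ = ⟪x, y⟫ := by
  have hne := D.inner_simple_self_ne_zero i
  rw [D.s_apply, D.s_apply]
  simp only [inner_sub_left, inner_sub_right, real_inner_smul_left, real_inner_smul_right]
  rw [real_inner_comm y (D.α i)]
  field_simp
  ring

lemma s_mem_W (i : Fin D.l) : D.s i ∈ D.W :=
  Subgroup.subset_closure ⟨i, rfl⟩

lemma wordProd_cons (i : Fin D.l) (L : List (Fin D.l)) :
    D.wordProd (i :: L) = D.s i * D.wordProd L := by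
  rw [wordProd, List.map_cons, List.prod_cons, wordProd]

lemma wordProd_append_singleton (L : List (Fin D.l)) (i : Fin D.l) :
    D.wordProd (L ++ [i]) = D.wordProd L * D.s i := by
  simp [wordProd]

lemma wordProd_mem_W (L : List (Fin D.l)) : D.wordProd L ∈ D.W :=
  Subgroup.list_prod_mem _ <| List.forall_mem_map.2 fun i _ => D.s_mem_W i

/-- The word `L` is a reduced expression of the product `D.wordProd L`. -/
def IsReduced (L : List (Fin D.l)) : Prop := D.len (D.wordProd L) = L.length

lemma len_wordProd_le (L : List (Fin D.l)) : D.len (D.wordProd L) ≤ L.length :=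
  Nat.sInf_le ⟨L, rfl, rfl⟩

lemma exists_isReduced (L : List (Fin D.l)) :
    ∃ N, D.IsReduced N ∧ D.wordProd N = D.wordProd L := by
  obtain ⟨N, hlen, hprod⟩ := Nat.sInf_mem
    (s := {k | ∃ N : List (Fin D.l), N.length = k ∧ D.wordProd N = D.wordProd L}) ⟨_, L, rfl, rfl⟩
  exact ⟨N, by rw [IsReduced, hprod, hlen, len], hprod⟩

variable {D}

lemma IsNonnegComb.eq_zero_of_neg (h : D.IsNonnegComb v) (hneg : D.IsNonnegComb (-v)) :
    v = 0 := by
  rw [isNonnegComb_iff] at h hneg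
  refine D.simpleBasis.ext_elem fun i => ?_
  have hi := hneg i
  rw [map_neg, Finsupp.neg_apply] at hi
  rw [map_zero, Finsupp.zero_apply]
  linarith [h i]

lemma IsPos.not_isNonnegComb_neg (h : D.IsPos v) : ¬ D.IsNonnegComb (-v) :=
  fun hneg => h.2 (h.1.eq_zero_of_neg hneg)

lemma inner_map_map_of_mem_W (hw : w ∈ D.W) (x y : V) : ⟪w x, w y⟫ = ⟪x, y⟫ := by
  induction hw using Subgroup.closure_induction generalizing x y with
  | mem _ h => obtain ⟨i, rfl⟩ := h; exact D.inner_s_s i x y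
  | one => rfl
  | mul _ _ _ _ ha hb => exact (ha _ _).trans (hb x y)
  | inv a _ ha =>
    rw [← ha, LinearEquiv.coe_inv, LinearEquiv.apply_symm_apply, LinearEquiv.apply_symm_apply]

lemma pairing_map_map (hw : w ∈ D.W) (x y : V) : D.pairing (w x) (w y) = D.pairing x y := by
  simp only [pairing, inner_map_map_of_mem_W hw]

lemma map_root_mem (hw : w ∈ D.W) (hβ : β ∈ D.Φ) : w β ∈ D.Φ := by
  induction hw using Subgroup.closure_induction'' generalizing β with
  | mem _ h => obtain ⟨i, rfl⟩ := h; exact D.s_root β hβ i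
  | inv_mem _ h => obtain ⟨i, rfl⟩ := h; exact D.s_inv i ▸ D.s_root β hβ i
  | one => exact hβ
  | mul _ _ _ _ ha hb => exact ha (hb hβ)

lemma s_mul_eq_mul_s {i j : Fin D.l} (hw : w ∈ D.W) (h : w (D.α j) = D.α i) :
    D.s i * w = w * D.s j := by
  ext v
  rw [LinearEquiv.mul_apply, LinearEquiv.mul_apply, s_apply_eq_sub_pairing, s_apply_eq_sub_pairing,
    ← h, pairing_map_map hw, map_sub, map_smul]

/-- A positive root other than `α i` has a positive coefficient at some `α j` with `j ≠ i`, while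
`s i` changes only the coefficient at `α i`. -/
lemma IsPos.s_of_ne_simple (hpos : D.IsPos β) (hβ : β ∈ D.Φ) (hne : β ≠ D.α i) :
    D.IsPos (D.s i β) := by
  refine (D.isPos_or_isPos_neg (D.s_root β hβ i)).resolve_right fun hneg => hne ?_
  have hβ_coeff := D.isNonnegComb_iff.1 hpos.1
  have coeff_eq_zero (j : Fin D.l) (hj : j ≠ i) : D.simpleBasis.repr β j = 0 := by
    have hneg_coeff := D.isNonnegComb_iff.1 hneg.1 j
    simp only [s_apply_eq_sub_pairing, neg_sub, map_sub, map_smul, Finsupp.sub_apply,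
      Finsupp.smul_apply, repr_simple, hj.symm, if_false, smul_zero, zero_sub] at hneg_coeff
    linarith [hβ_coeff j]
  have β_eq : β = D.simpleBasis.repr β i • D.α i := by
    conv_lhs => rw [← D.sum_repr_smul_simple β]
    exact Finset.sum_eq_single i (fun j _ hj => by rw [coeff_eq_zero j hj, zero_smul]) (by simp)
  rcases D.reduced _ (D.α_mem i) _ (β_eq ▸ hβ) with h | h
  · rw [β_eq, h, one_smul]
  · linarith [hβ_coeff i]

lemma isPos_inv_simple_or_exists_length_lt (i : Fin D.l) (L : List (Fin D.l)) :
    D.IsPos ((D.wordProd L)⁻¹ (D.α i)) ∨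
      ∃ N : List (Fin D.l), N.length < L.length ∧ D.wordProd N = D.s i * D.wordProd L := by
  induction L using List.reverseRecOn with
  | nil => exact .inl (D.isPos_simple i)
  | append_singleton L m ih =>
    have hL := D.wordProd_mem_W L
    rcases ih with hpos | ⟨N, hN, hprod⟩
    · by_cases hm : (D.wordProd L)⁻¹ (D.α i) = D.α m
      · have hconj : D.s i * D.wordProd L = D.wordProd L * D.s m :=
          s_mul_eq_mul_s hL (by rw [← hm, LinearEquiv.coe_inv, LinearEquiv.apply_symm_apply])
        refine .inr ⟨L, by simp, ?_⟩
        rw [wordProd_append_singleton, ← mul_assoc, hconj, mul_assoc, s_mul_self, mul_one]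
      · left
        rw [wordProd_append_singleton, mul_inv_rev, s_inv]
        exact hpos.s_of_ne_simple (map_root_mem (inv_mem hL) (D.α_mem i)) hm
    · refine .inr ⟨N ++ [m], by simpa using hN, ?_⟩
      rw [wordProd_append_singleton, wordProd_append_singleton, hprod, mul_assoc]

lemma IsReduced.length_le {N : List (Fin D.l)} (hL : D.IsReduced L)
    (hN : D.wordProd N = D.wordProd L) : L.length ≤ N.length := by
  rw [← hL, ← hN]
  exact D.len_wordProd_le N

lemma IsReduced.of_cons (h : D.IsReduced (i :: L)) : D.IsReduced L := by
  obtain ⟨N, hN, hprod⟩ := D.exists_isReduced L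
  have hle : (i :: L).length ≤ (i :: N).length :=
    h.length_le (by rw [wordProd_cons, wordProd_cons, hprod])
  refine (D.len_wordProd_le L).antisymm ?_
  rw [← hprod, hN]
  simpa using hle

lemma IsReduced.isPos_inv_simple (h : D.IsReduced (i :: L)) :
    D.IsPos ((D.wordProd L)⁻¹ (D.α i)) := by
  refine (isPos_inv_simple_or_exists_length_lt i L).resolve_right ?_
  rintro ⟨N, hlt, hprod⟩
  have hle := h.length_le (hprod.trans (D.wordProd_cons i L).symm)
  rw [List.length_cons] at hle
  lia

lemma pairing_eq_zero_iff : D.pairing ω β = 0 ↔ ⟪ω, β⟫ = 0 := by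
  rcases eq_or_ne β 0 with rfl | hβ
  · simp [pairing]
  · simp [pairing, hβ]

lemma pairing_nonneg_iff : 0 ≤ D.pairing ω β ↔ 0 ≤ ⟪ω, β⟫ := by
  rcases eq_or_ne β 0 with rfl | hβ
  · simp [pairing]
  · rw [pairing, le_div_iff₀ (real_inner_self_pos.2 hβ), zero_mul,
      mul_nonneg_iff_of_pos_left two_pos]

lemma inner_eq_sum_repr_mul (ω v : V) :
    ⟪ω, v⟫ = ∑ i, D.simpleBasis.repr v i * ⟪ω, D.α i⟫ := by
  conv_lhs => rw [← D.sum_repr_smul_simple v]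
  simp only [inner_sum, real_inner_smul_right]

lemma IsDominant.repr_mul_inner_nonneg (hω : D.IsDominant ω) (hv : D.IsNonnegComb v)
    (i : Fin D.l) : 0 ≤ D.simpleBasis.repr v i * ⟪ω, D.α i⟫ :=
  mul_nonneg (D.isNonnegComb_iff.1 hv i) (pairing_nonneg_iff.1 (hω i))

lemma IsDominant.pairing_nonneg (hω : D.IsDominant ω) (hv : D.IsNonnegComb v) :
    0 ≤ D.pairing ω v := by
  rw [pairing_nonneg_iff, inner_eq_sum_repr_mul (D := D)]
  exact Finset.sum_nonneg fun i _ => hω.repr_mul_inner_nonneg hv i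

lemma IsDominant.repr_eq_zero_or_pairing_eq_zero (hω : D.IsDominant ω) (hv : D.IsNonnegComb v)
    (h : D.pairing ω v = 0) (i : Fin D.l) :
    D.simpleBasis.repr v i = 0 ∨ D.pairing ω (D.α i) = 0 := by
  rw [pairing_eq_zero_iff, inner_eq_sum_repr_mul (D := D),
    Finset.sum_eq_zero_iff_of_nonneg fun i _ => hω.repr_mul_inner_nonneg hv i] at h
  rw [pairing_eq_zero_iff]
  exact mul_eq_zero.1 (h i (Finset.mem_univ i))

lemma isNonnegComb_map_of_mem_WI (hω : D.IsDominant ω) (hw : w ∈ D.WI ω)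
    (hv : D.IsNonnegComb v) (h : D.pairing ω v = 0) : D.IsNonnegComb (w v) := by
  refine D.isNonnegComb_iff.2 fun k => ?_
  rw [← D.sum_repr_smul_simple v]
  simp only [map_sum, map_smul, Finsupp.coe_finsetSum, Finset.sum_apply, Finsupp.smul_apply,
    smul_eq_mul]
  refine Finset.sum_nonneg fun j _ => ?_
  rcases hω.repr_eq_zero_or_pairing_eq_zero hv h j with hj | hj
  · rw [hj, zero_mul]
  · exact mul_nonneg (D.isNonnegComb_iff.1 hv j) (D.isNonnegComb_iff.1 (hw.2 j hj).1 k)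

lemma IsMinuscule.pairing_eq_zero_or_one (hω : D.IsMinuscule ω) (hβ : β ∈ D.Φ)
    (hpos : D.IsPos β) : D.pairing ω β = 0 ∨ D.pairing ω β = 1 := by
  refine (hω.2 β hβ).resolve_left fun h => ?_
  linarith [hω.1.pairing_nonneg hpos.1]

lemma mem_WI_of_s_mul_mem_WI (hsw : D.s i * w ∈ D.WI ω) (hpos : D.IsPos (w⁻¹ (D.α i))) :
    w ∈ D.WI ω := by
  have hw : w ∈ D.W := (D.W.mul_mem_cancel_left (D.s_mem_W i)).1 hsw.1
  refine ⟨hw, fun j hj => ?_⟩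
  have hroot : w (D.α j) ∈ D.Φ := map_root_mem hw (D.α_mem j)
  refine (D.isPos_or_isPos_neg hroot).resolve_right fun hneg => ?_
  by_cases hi : -w (D.α j) = D.α i
  · rw [← hi, map_neg, LinearEquiv.coe_inv, LinearEquiv.symm_apply_apply] at hpos
    exact (D.isPos_simple j).not_isNonnegComb_neg hpos.1
  · have hroot_neg : -w (D.α j) ∈ D.Φ := by
      rw [← map_neg, ← s_simple_self]
      exact map_root_mem hw (D.s_root _ (D.α_mem j) j)
    have hneg' := hneg.s_of_ne_simple hroot_neg hi
    rw [map_neg] at hneg'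
    exact (hsw.2 j hj).not_isNonnegComb_neg hneg'.1

lemma IsMinuscule.pairing_map_simple_eq_one (hω : D.IsMinuscule ω) (hsw : D.s i * w ∈ D.WI ω)
    (hpos : D.IsPos (w⁻¹ (D.α i))) : D.pairing (w ω) (D.α i) = 1 := by
  have hw : w ∈ D.W := (D.W.mul_mem_cancel_left (D.s_mem_W i)).1 hsw.1
  have hroot : w⁻¹ (D.α i) ∈ D.Φ := map_root_mem (inv_mem hw) (D.α_mem i)
  have hcancel : w (w⁻¹ (D.α i)) = D.α i := w.apply_symm_apply _
  have hpair : D.pairing (w ω) (D.α i) = D.pairing ω (w⁻¹ (D.α i)) := by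
    rw [← pairing_map_map hw ω, hcancel]
  rw [hpair]
  refine (hω.pairing_eq_zero_or_one hroot hpos).resolve_left fun hzero => ?_
  have hnonneg := isNonnegComb_map_of_mem_WI hω.1 hsw hpos.1 hzero
  rw [LinearEquiv.mul_apply, hcancel, s_simple_self] at hnonneg
  exact (D.isPos_simple i).not_isNonnegComb_neg hnonneg

lemma IsMinuscule.wordProd_apply (hω : D.IsMinuscule ω) (hred : D.IsReduced L)
    (hL : D.wordProd L ∈ D.WI ω) : D.wordProd L ω = ω - (L.map D.α).sum := by
  induction L with
  | nil => simp [wordProd]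
  | cons i L ih =>
    rw [wordProd_cons] at hL
    have hpos := hred.isPos_inv_simple
    calc D.wordProd (i :: L) ω = D.s i (D.wordProd L ω) := by
          rw [wordProd_cons, LinearEquiv.mul_apply]
      _ = D.wordProd L ω - D.α i := by
          rw [s_apply_eq_sub_pairing, hω.pairing_map_simple_eq_one hL hpos, one_smul]
      _ = ω - (L.map D.α).sum - D.α i := by
          rw [ih hred.of_cons (mem_WI_of_s_mul_mem_WI hL hpos)]
      _ = ω - ((i :: L).map D.α).sum := by
          rw [List.map_cons, List.sum_cons]; abel

end RootSystemWithBase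

/-- Let `ω` be a minuscule weight, `w ∈ W^I` and
`w = s_{i₁} · s_{i₂} ⋯ s_{i_k}` a reduced expression.  Then
`w(ω) = ω − ∑_{j=1}^k α_{i_j}`, and `ℓ(w) = ht(ω − w(ω))`. -/
theorem stmt3 {V : Type*} [NormedAddCommGroup V] [InnerProductSpace ℝ V]
    (D : RootSystemWithBase V) (ω : V) (hω : D.IsMinuscule ω)
    (w : V ≃ₗ[ℝ] V) (hw : w ∈ D.WI ω)
    (L : List (Fin D.l)) (hL : D.wordProd L = w) (hred : L.length = D.len w) :
    w ω = ω - (L.map D.α).sum ∧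
      ∀ c : Fin D.l → ℝ, ω - w ω = ∑ i, c i • D.α i → (D.len w : ℝ) = ∑ i, c i := by
  subst hL
  have happly := hω.wordProd_apply hred.symm hw
  refine ⟨happly, fun c hc => ?_⟩
  calc (D.len (D.wordProd L) : ℝ) = D.height (L.map D.α).sum := by
        rw [← hred, D.height_sum_map_simple]
    _ = D.height (∑ i, c i • D.α i) := by rw [← hc, happly, sub_sub_cancel]
    _ = ∑ i, c i := D.height_sum_smul_simple c
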